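/- arXiv:2106.03277 — 17 statements merged into one kernel-verified Lean document; each statement's English description precedes it below -/
import Mathlib

section
/- Let (A,·,α) be a commutative Hom-associative algebra, (V,β) a pair of a vector space and a linear endomorphism, and s : A → End(V) a linear map such that (s,β,V) is a bimodule of (A,·,α), i.e. s(x·y)β(v) = s(α(x))(s(y)v) and β(s(x)v) = s(α(x))β(v) for all x,y ∈ A, v ∈ V. Then the direct sum A ⊕ V equipped with the product (x₁+v₁)·'(x₂+v₂) = x₁·x₂ + s(x₁)v₂ + s(x₂)v₁ and the linear map (α⊕β)(x+v) = α(x)+β(v) is a commutative Hom-associative algebra, i.e. ·' is commutative and ((u₁·'u₂)·'(α⊕β)(u₃)) = ((α⊕β)(u₁))·'(u₂·'u₃) for all u₁,u₂,u₃ ∈ A⊕V. -/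
/-- The semidirect sum of a commutative Hom-associative algebra with a
bimodule is a commutative Hom-associative algebra. -/
theorem semidirect_comm_hom_assoc
    {K A V : Type*} [Field K] [CharZero K]
    [AddCommGroup A] [Module K A] [AddCommGroup V] [Module K V]
    (mul : A →ₗ[K] A →ₗ[K] A) (α : A →ₗ[K] A)
    (hcomm : ∀ x y : A, mul x y = mul y x)
    (hassoc : ∀ x y z : A, mul (mul x y) (α z) = mul (α x) (mul y z))
    (s : A →ₗ[K] V →ₗ[K] V) (β : V →ₗ[K] V)
    (hb1 : ∀ (x y : A) (v : V), s (mul x y) (β v) = s (α x) (s y v))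
    (hb2 : ∀ (x : A) (v : V), β (s x v) = s (α x) (β v))
    (mul' : (A × V) → (A × V) → (A × V))
    (hmul' : ∀ u w : A × V, mul' u w = (mul u.1 w.1, s u.1 w.2 + s w.1 u.2))
    (αβ : (A × V) → (A × V))
    (hαβ : ∀ u : A × V, αβ u = (α u.1, β u.2)) :
    (∀ u w : A × V, mul' u w = mul' w u) ∧
    (∀ u₁ u₂ u₃ : A × V, mul' (mul' u₁ u₂) (αβ u₃) = mul' (αβ u₁) (mul' u₂ u₃)) := by
  refine ⟨fun u w => ?_, fun u₁ u₂ u₃ => ?_⟩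
  · rw [hmul', hmul', hcomm u.1 w.1, add_comm]
  · simp only [hmul', hαβ, map_add, ← hb1, hassoc]
    rw [hcomm u₃.1 u₁.1, hcomm u₃.1 u₂.1, add_assoc]
end

section
/- Let (A,·,α) be a multiplicative commutative Hom-associative algebra and let D₁, D₂ be derivations of (A,·,α) (so αDᵢ = Dᵢα and Dᵢ(x·y) = Dᵢ(x)·y + x·Dᵢ(y)) with D₁D₂ = D₂D₁. Define {x,y} = D₁(x)·D₂(y) − D₁(y)·D₂(x). Then (A,·,{·,·},α) is a Hom-Poisson algebra: (A,{·,·},α) is a Hom-Lie algebra and the Hom-Leibniz identity {x·y,α(z)} = {x,z}·α(y) + α(x)·{y,z} holds for all x,y,z ∈ A. -/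
/-- Two commuting derivations of a multiplicative commutative
Hom-associative algebra yield a Hom-Poisson algebra. -/
theorem homPoisson_of_two_commuting_derivations
    {K A : Type*} [Field K] [CharZero K] [AddCommGroup A] [Module K A]
    (mul : A →ₗ[K] A →ₗ[K] A) (α : A →ₗ[K] A)
    (hcomm : ∀ x y : A, mul x y = mul y x)
    (hassoc : ∀ x y z : A, mul (mul x y) (α z) = mul (α x) (mul y z))
    (hmult : ∀ x y : A, α (mul x y) = mul (α x) (α y))
    (D₁ D₂ : A →ₗ[K] A)
    (hD₁α : ∀ x : A, α (D₁ x) = D₁ (α x))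
    (hD₂α : ∀ x : A, α (D₂ x) = D₂ (α x))
    (hD₁ : ∀ x y : A, D₁ (mul x y) = mul (D₁ x) y + mul x (D₁ y))
    (hD₂ : ∀ x y : A, D₂ (mul x y) = mul (D₂ x) y + mul x (D₂ y))
    (hDD : ∀ x : A, D₁ (D₂ x) = D₂ (D₁ x))
    (br : A → A → A)
    (hbr : ∀ x y : A, br x y = mul (D₁ x) (D₂ y) - mul (D₁ y) (D₂ x)) :
    (∀ x y : A, br x y = - br y x) ∧
    (∀ x y z : A, br (α x) (br y z) + br (α y) (br z x) + br (α z) (br x y) = 0) ∧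
    (∀ x y z : A, br (mul x y) (α z) = mul (br x z) (α y) + mul (α x) (br y z)) := by
  obtain ⟨T, hT⟩ : ∃ T : A → A → A → A, ∀ a b c, mul (α a) (mul b c) = T a b c :=
    ⟨fun a b c => mul (α a) (mul b c), fun _ _ _ => rfl⟩
  have hT' : ∀ a b c, mul (mul a b) (α c) = T a b c := fun a b c => by
    rw [hassoc, hT]
  have s1 : ∀ a b c, T a b c = T a c b := fun a b c => by
    rw [← hT, ← hT, hcomm b c]
  have s2 : ∀ a b c, T a b c = T b a c := fun a b c => by
    rw [← hT', ← hT', hcomm a b]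
  refine ⟨fun x y => ?_, fun x y z => ?_, fun x y z => ?_⟩
  · rw [hbr, hbr]; abel
  · simp only [hbr, ← hD₁α, ← hD₂α, map_sub, map_add, hD₁, hD₂, hDD,
      LinearMap.sub_apply, LinearMap.add_apply, hT, hT']
    simp only [s1, s2]
    abel
  · simp only [hbr, ← hD₁α, ← hD₂α, map_sub, map_add, hD₁, hD₂,
      LinearMap.sub_apply, LinearMap.add_apply, hT, hT']
    simp only [s1, s2]
    abel
end

section
/- Let (A,·,α) be a multiplicative commutative Hom-associative algebra and let D be a derivation of (A,·,α) (so αD = Dα and D(x·y) = D(x)·y + x·D(y)). Define {x,y} = x·D(y) − D(x)·y. Then (A,·,{·,·},α) is a transposed Hom-Poisson algebra: (A,{·,·},α) is a Hom-Lie algebra and the transposed Hom-Leibniz identity 2α(z)·{x,y} = {z·x,α(y)} + {α(x),z·y} holds for all x,y,z ∈ A. -/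
/-- A derivation of a multiplicative commutative Hom-associative
algebra yields a transposed Hom-Poisson algebra via {x,y} = x·D(y) − D(x)·y. -/
theorem transposedHomPoisson_of_derivation
    {K A : Type*} [Field K] [CharZero K] [AddCommGroup A] [Module K A]
    (mul : A →ₗ[K] A →ₗ[K] A) (α : A →ₗ[K] A)
    (hcomm : ∀ x y : A, mul x y = mul y x)
    (hassoc : ∀ x y z : A, mul (mul x y) (α z) = mul (α x) (mul y z))
    (hmult : ∀ x y : A, α (mul x y) = mul (α x) (α y))
    (D : A →ₗ[K] A)
    (hDα : ∀ x : A, α (D x) = D (α x))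
    (hD : ∀ x y : A, D (mul x y) = mul (D x) y + mul x (D y))
    (br : A → A → A)
    (hbr : ∀ x y : A, br x y = mul x (D y) - mul (D x) y) :
    (∀ x y : A, br x y = - br y x) ∧
    (∀ x y z : A, br (α x) (br y z) + br (α y) (br z x) + br (α z) (br x y) = 0) ∧
    (∀ x y z : A, (2 : K) • mul (α z) (br x y) = br (mul z x) (α y) + br (α x) (mul z y)) := by
  have hcyc : ∀ x y z : A, mul (α x) (mul y z) = mul (α z) (mul x y) := fun x y z => by
    rw [← hassoc, hcomm]
  have hsw : ∀ x y z : A, mul (α x) (mul y z) = mul (α x) (mul z y) := fun x y z => by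
    rw [hcomm y z]
  refine ⟨fun x y => ?_, fun x y z => ?_, fun x y z => ?_⟩
  · rw [hbr, hbr, hcomm x, hcomm y]
    abel
  · simp only [hbr, map_sub, map_add, hD, ← hDα, LinearMap.sub_apply, LinearMap.add_apply]
    rw [hcyc y z (D (D x)), hcyc y (D (D z)) x, hcyc (D y) z (D x), hcyc (D y) (D z) x,
      ← hcyc (D (D x)) y z, ← hcyc x (D (D y)) z, ← hcyc (D x) y (D z),
      ← hcyc x (D y) (D z)]
    abel
  · simp only [hbr, map_sub, map_add, hD, ← hDα, LinearMap.add_apply,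
      hassoc, two_smul]
    rw [hsw x (D z) y, hcyc x y (D z), hsw x z (D y), hcyc x (D y) z, hsw (D x) z y,
      hcyc (D x) y z]
    abel
end

section
/- Let (A,·,{·,·}) be a transposed Poisson algebra. Then for all x,y,z,t ∈ A, {x·z, y·t} + {x·t, y·z} = 2(z·t)·{x,y}. -/
/-- In a transposed Poisson algebra,
{x·z, y·t} + {x·t, y·z} = 2(z·t)·{x,y}. -/
theorem transposedPoisson_identity
    {K A : Type*} [Field K] [CharZero K] [AddCommGroup A] [Module K A]
    (mul : A →ₗ[K] A →ₗ[K] A) (br : A →ₗ[K] A →ₗ[K] A)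
    (hcomm : ∀ x y : A, mul x y = mul y x)
    (hassoc : ∀ x y z : A, mul (mul x y) z = mul x (mul y z))
    (hskew : ∀ x y : A, br x y = - br y x)
    (hjac : ∀ x y z : A, br x (br y z) + br y (br z x) + br z (br x y) = 0)
    (hleib : ∀ x y z : A, (2 : K) • mul z (br x y) = br (mul z x) y + br x (mul z y)) :
    ∀ x y z t : A,
      br (mul x z) (mul y t) + br (mul x t) (mul y z) = (2 : K) • mul (mul z t) (br x y) := by
  intro x y z t
  have h1 := hleib x y (mul z t)
  have h2 := hleib (mul t x) y z
  have h3 := hleib x (mul t y) z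
  have h4 : (2 : K) • mul z ((2 : K) • mul t (br x y))
      = (2 : K) • mul z (br (mul t x) y) + (2 : K) • mul z (br x (mul t y)) := by
    rw [hleib x y t, map_add, smul_add]
  rw [h2, h3, map_smul, ← hassoc, two_smul K ((2 : K) • mul (mul z t) (br x y))] at h4
  rw [hassoc z t x, hassoc z t y] at h1
  rw [hcomm x z, hcomm y t, hcomm x t, hcomm y z]
  have h5 : (2 : K) • mul (mul z t) (br x y)
      = ((2 : K) • mul (mul z t) (br x y) + (2 : K) • mul (mul z t) (br x y))
        - (2 : K) • mul (mul z t) (br x y) := by abel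
  rw [h5, h4, h1]
  abel
end

section
/- Let (A,·,{·,·}) be a transposed Poisson algebra and fix h ∈ A. Define the linear map α_h : A → A by α_h(x) = h·x. Then (A,{·,·},α_h) is a Hom-Lie algebra, i.e. {α_h(x),{y,z}} + {α_h(y),{z,x}} + {α_h(z),{x,y}} = 0 for all x,y,z ∈ A. -/
/-- In a transposed Poisson algebra, for any fixed h, the map
α_h(x) = h·x makes (A,{·,·},α_h) a Hom-Lie algebra. -/
theorem homLie_of_transposedPoisson_alpha_h
    {K A : Type*} [Field K] [CharZero K] [AddCommGroup A] [Module K A]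
    (mul : A →ₗ[K] A →ₗ[K] A) (br : A →ₗ[K] A →ₗ[K] A)
    (hcomm : ∀ x y : A, mul x y = mul y x)
    (hassoc : ∀ x y z : A, mul (mul x y) z = mul x (mul y z))
    (hskew : ∀ x y : A, br x y = - br y x)
    (hjac : ∀ x y z : A, br x (br y z) + br y (br z x) + br z (br x y) = 0)
    (hleib : ∀ x y z : A, (2 : K) • mul z (br x y) = br (mul z x) y + br x (mul z y))
    (h : A) :
    ∀ x y z : A,
      br (mul h x) (br y z) + br (mul h y) (br z x) + br (mul h z) (br x y) = 0 := by
  intro x y z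
  have key : ∀ a b c : A, (2 : K) • br a (mul h (br b c))
      = br a (br (mul h b) c) + br a (br b (mul h c)) := by
    intro a b c
    rw [← map_smul, hleib, map_add]
  have e : mul h (br x (br y z)) + mul h (br y (br z x)) + mul h (br z (br x y)) = 0 := by
    rw [← map_add, ← map_add, hjac, map_zero]
  have l1 := hleib x (br y z) h
  have l2 := hleib y (br z x) h
  have l3 := hleib z (br x y) h
  have k1 := key x y z
  have k2 := key y z x
  have k3 := key z x y
  have j1 := hjac (mul h x) y z
  have j2 := hjac (mul h y) z x
  have j3 := hjac (mul h z) x y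
  linear_combination (norm := module) (4 : K) • e - (2 : K) • l1 - (2 : K) • l2 - (2 : K) • l3
    - j1 - j2 - j3 - k1 - k2 - k3
end

section
/- Let (A,·,{·,·}) be a transposed Poisson algebra and fix h ∈ A. Define the linear map α_h : A → A by α_h(x) = h·x. Then (A,·,{·,·},α_h) is a transposed Hom-Poisson algebra; in particular the transposed Hom-Leibniz identity {z·x, α_h(y)} + {α_h(x), z·y} = 2α_h(z)·{x,y} holds for all x,y,z ∈ A. -/
/-- In a transposed Poisson algebra, for any fixed h, the map
α_h(x) = h·x makes (A,·,{·,·},α_h) a transposed Hom-Poisson algebra. -/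
theorem transposedHomPoisson_of_transposedPoisson_alpha_h
    {K A : Type*} [Field K] [CharZero K] [AddCommGroup A] [Module K A]
    (mul : A →ₗ[K] A →ₗ[K] A) (br : A →ₗ[K] A →ₗ[K] A)
    (hcomm : ∀ x y : A, mul x y = mul y x)
    (hassoc : ∀ x y z : A, mul (mul x y) z = mul x (mul y z))
    (hskew : ∀ x y : A, br x y = - br y x)
    (hjac : ∀ x y z : A, br x (br y z) + br y (br z x) + br z (br x y) = 0)
    (hleib : ∀ x y z : A, (2 : K) • mul z (br x y) = br (mul z x) y + br x (mul z y))
    (h : A) :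
    (∀ x y z : A, mul (mul x y) (mul h z) = mul (mul h x) (mul y z)) ∧
    (∀ x y z : A,
      br (mul h x) (br y z) + br (mul h y) (br z x) + br (mul h z) (br x y) = 0) ∧
    (∀ x y z : A,
      br (mul z x) (mul h y) + br (mul h x) (mul z y) = (2 : K) • mul (mul h z) (br x y)) := by
  refine ⟨?_, ?_, ?_⟩
  · intro x y z
    rw [hassoc x y, hassoc h x, ← hassoc y h z, hcomm y h, hassoc h y z, ← hassoc x h, hcomm x h,
      hassoc h x]
  · intro x y z
    have e : ∀ a b c : A, (2 : K) • br a (mul h (br b c))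
        = br a (br (mul h b) c) + br a (br b (mul h c)) := by
      intro a b c
      rw [← map_smul, hleib, map_add]
    have l1 := hleib x (br y z) h
    have l2 := hleib y (br z x) h
    have l3 := hleib z (br x y) h
    have j : mul h (br x (br y z)) + mul h (br y (br z x)) + mul h (br z (br x y)) = 0 := by
      rw [← map_add, ← map_add, hjac, map_zero]
    have j1 := hjac (mul h x) y z
    have j2 := hjac (mul h y) z x
    have j3 := hjac (mul h z) x y
    have e1 := e x y z
    have e2 := e y z x
    have e3 := e z x y
    linear_combination (norm := module) (4 : K) • j - (2 : K) • l1 - (2 : K) • l2 - (2 : K) • l3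
      - j1 - j2 - j3 - e1 - e2 - e3
  · intro x y z
    have l1 := hleib (mul z x) y h
    have l2 := hleib x (mul z y) h
    have l3 := hleib x y (mul h z)
    have l4 : (2 : K) • mul h (mul z (br x y))
        = mul h (br (mul z x) y) + mul h (br x (mul z y)) := by
      rw [← map_smul, hleib, map_add]
    simp only [hassoc] at *
    linear_combination (norm := module) l3 - l1 - l2 - (2 : K) • l4
end

section
/- Let (A,·,{·,·},α) be a transposed Hom-Poisson algebra. Then for all x,y,z ∈ A, α(x)·{y,z} + α(y)·{z,x} + α(z)·{x,y} = 0. -/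
/-- In a transposed Hom-Poisson algebra,
α(x)·{y,z} + α(y)·{z,x} + α(z)·{x,y} = 0. -/
theorem transposedHomPoisson_cyclic_identity
    {K A : Type*} [Field K] [CharZero K] [AddCommGroup A] [Module K A]
    (mul : A →ₗ[K] A →ₗ[K] A) (br : A →ₗ[K] A →ₗ[K] A) (α : A →ₗ[K] A)
    (hcomm : ∀ x y : A, mul x y = mul y x)
    (hassoc : ∀ x y z : A, mul (mul x y) (α z) = mul (α x) (mul y z))
    (hskew : ∀ x y : A, br x y = - br y x)
    (hjac : ∀ x y z : A, br (α x) (br y z) + br (α y) (br z x) + br (α z) (br x y) = 0)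
    (hleib : ∀ x y z : A,
      (2 : K) • mul (α z) (br x y) = br (mul z x) (α y) + br (α x) (mul z y)) :
    ∀ x y z : A, mul (α x) (br y z) + mul (α y) (br z x) + mul (α z) (br x y) = 0 := by
  intro x y z
  have h1 := hleib x y z
  have h2 := hleib y z x
  have h3 := hleib z x y
  rw [hskew (α x) (mul z y), hcomm z y] at h1
  rw [hskew (α y) (mul x z), hcomm x z] at h2
  rw [hskew (α z) (mul y x), hcomm y x] at h3
  have h : (2 : K) • (mul (α x) (br y z) + mul (α y) (br z x) + mul (α z) (br x y)) = 0 := by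
    rw [smul_add, smul_add, h1, h2, h3]
    abel
  exact (smul_eq_zero.mp h).resolve_left two_ne_zero
end

section
/- Let A be a vector space equipped with a bilinear product · making (A,·,α) a commutative Hom-associative algebra and a bilinear bracket {·,·} making (A,{·,·},α) a Hom-Lie algebra. Then (A,·,{·,·},α) is simultaneously a Hom-Poisson algebra (i.e. {x·y,α(z)} = {x,z}·α(y) + α(x)·{y,z} for all x,y,z) and a transposed Hom-Poisson algebra (i.e. 2α(z)·{x,y} = {z·x,α(y)} + {α(x),z·y} for all x,y,z) if and only if α(x)·{y,z} = 0 and {x·y,α(z)} = 0 for all x,y,z ∈ A. -/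
/-- A commutative Hom-associative algebra together with a Hom-Lie
algebra is simultaneously a Hom-Poisson algebra and a transposed Hom-Poisson
algebra iff α(x)·{y,z} = 0 and {x·y,α(z)} = 0 for all x,y,z. -/
theorem homPoisson_and_transposed_iff_trivial
    {K A : Type*} [Field K] [CharZero K] [AddCommGroup A] [Module K A]
    (mul : A →ₗ[K] A →ₗ[K] A) (br : A →ₗ[K] A →ₗ[K] A) (α : A →ₗ[K] A)
    (hcomm : ∀ x y : A, mul x y = mul y x)
    (hassoc : ∀ x y z : A, mul (mul x y) (α z) = mul (α x) (mul y z))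
    (hskew : ∀ x y : A, br x y = - br y x)
    (hjac : ∀ x y z : A, br (α x) (br y z) + br (α y) (br z x) + br (α z) (br x y) = 0) :
    ((∀ x y z : A, br (mul x y) (α z) = mul (br x z) (α y) + mul (α x) (br y z)) ∧
     (∀ x y z : A, (2 : K) • mul (α z) (br x y) = br (mul z x) (α y) + br (α x) (mul z y)))
    ↔ (∀ x y z : A, mul (α x) (br y z) = 0 ∧ br (mul x y) (α z) = 0) := by
  have skewP : ∀ x y z : A, mul (α x) (br y z) = - mul (α x) (br z y) := by
    intro x y z
    rw [hskew y z, map_neg]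
  constructor
  · rintro ⟨hP, hT⟩
    have hsym : ∀ x y z : A, mul (α x) (br z y) = mul (α y) (br z x) := by
      intro x y z
      have h := hT x y z
      rw [hskew (α x) (mul z y), hP z x y, hP z y x, hcomm (br z y) (α x),
        hcomm (br z x) (α y), skewP z y x, two_smul] at h
      have h2 : mul (α x) (br z y) - mul (α y) (br z x) = 0 := by
        rw [← sub_eq_zero] at h
        rw [← neg_eq_zero, ← h]
        abel
      exact sub_eq_zero.mp h2
    have hzero : ∀ x y z : A, mul (α x) (br y z) = 0 := by
      intro x y z
      have h : mul (α x) (br y z) = - mul (α x) (br y z) := by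
        calc mul (α x) (br y z) = mul (α z) (br y x) := hsym x z y
          _ = - mul (α z) (br x y) := skewP z y x
          _ = - mul (α y) (br x z) := by rw [hsym z y x]
          _ = mul (α y) (br z x) := by rw [skewP y x z, neg_neg]
          _ = mul (α x) (br z y) := hsym y x z
          _ = - mul (α x) (br y z) := skewP x z y
      have h2 : (2 : K) • mul (α x) (br y z) = 0 := by
        rw [two_smul]
        exact eq_neg_iff_add_eq_zero.mp h
      exact (smul_eq_zero.mp h2).resolve_left two_ne_zero
    intro x y z
    refine ⟨hzero x y z, ?_⟩
    rw [hP, hcomm (br x z), hzero, hzero, add_zero]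
  · intro h
    refine ⟨fun x y z => ?_, fun x y z => ?_⟩
    · rw [(h x y z).2, hcomm (br x z), (h y x z).1, (h x y z).1, add_zero]
    · rw [(h z x y).1, (h z x y).2, hskew (α x), (h z y x).2, smul_zero, neg_zero, add_zero]
end

section
/- Let (A,·,{·,·}) be a transposed Poisson algebra and let α : A → A be a morphism of transposed Poisson algebras (a linear map with α(x·y) = α(x)·α(y) and α({x,y}) = {α(x),α(y)}). Define x ·_α y = α(x·y) and {x,y}_α = α({x,y}). Then (A, ·_α, {·,·}_α, α) is a transposed Hom-Poisson algebra. Moreover, if (A',·',{·,·}') is another transposed Poisson algebra with morphism α' : A' → A', and f : A → A' is a morphism of transposed Poisson algebras with f∘α = α'∘f, then f is a morphism of the transposed Hom-Poisson algebras (A,·_α,{·,·}_α,α) → (A',·'_{α'},{·,·}'_{α'},α'), i.e. f(x ·_α y) = f(x) ·'_{α'} f(y), f({x,y}_α) = {f(x),f(y)}'_{α'} and f∘α = α'∘f. -/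
/-- The Yau twist of a transposed Poisson algebra along a morphism α
is a transposed Hom-Poisson algebra, and morphisms commuting with the twisting
maps are carried to morphisms of the twisted algebras. -/
theorem yauTwist_transposedPoisson
    {K A A' : Type*} [Field K] [CharZero K]
    [AddCommGroup A] [Module K A] [AddCommGroup A'] [Module K A']
    -- transposed Poisson algebra (A, mul, br)
    (mul : A →ₗ[K] A →ₗ[K] A) (br : A →ₗ[K] A →ₗ[K] A)
    (hcomm : ∀ x y : A, mul x y = mul y x)
    (hassoc : ∀ x y z : A, mul (mul x y) z = mul x (mul y z))
    (hskew : ∀ x y : A, br x y = - br y x)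
    (hjac : ∀ x y z : A, br x (br y z) + br y (br z x) + br z (br x y) = 0)
    (hleib : ∀ x y z : A, (2 : K) • mul z (br x y) = br (mul z x) y + br x (mul z y))
    -- morphism α of (A, mul, br)
    (α : A →ₗ[K] A)
    (hαm : ∀ x y : A, α (mul x y) = mul (α x) (α y))
    (hαb : ∀ x y : A, α (br x y) = br (α x) (α y))
    -- twisted operations on A
    (mulα brα : A → A → A)
    (hmulα : ∀ x y : A, mulα x y = α (mul x y))
    (hbrα : ∀ x y : A, brα x y = α (br x y))
    -- transposed Poisson algebra (A', mul', br')
    (mul' : A' →ₗ[K] A' →ₗ[K] A') (br' : A' →ₗ[K] A' →ₗ[K] A')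
    (hcomm' : ∀ x y : A', mul' x y = mul' y x)
    (hassoc' : ∀ x y z : A', mul' (mul' x y) z = mul' x (mul' y z))
    (hskew' : ∀ x y : A', br' x y = - br' y x)
    (hjac' : ∀ x y z : A', br' x (br' y z) + br' y (br' z x) + br' z (br' x y) = 0)
    (hleib' : ∀ x y z : A', (2 : K) • mul' z (br' x y) = br' (mul' z x) y + br' x (mul' z y))
    -- morphism α' of (A', mul', br')
    (α' : A' →ₗ[K] A')
    (hα'm : ∀ x y : A', α' (mul' x y) = mul' (α' x) (α' y))
    (hα'b : ∀ x y : A', α' (br' x y) = br' (α' x) (α' y))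
    -- twisted operations on A'
    (mul'α' br'α' : A' → A' → A')
    (hmul'α' : ∀ x y : A', mul'α' x y = α' (mul' x y))
    (hbr'α' : ∀ x y : A', br'α' x y = α' (br' x y))
    -- morphism f of transposed Poisson algebras commuting with the twists
    (f : A →ₗ[K] A')
    (hfm : ∀ x y : A, f (mul x y) = mul' (f x) (f y))
    (hfb : ∀ x y : A, f (br x y) = br' (f x) (f y))
    (hfα : ∀ x : A, f (α x) = α' (f x)) :
    -- (A, mulα, brα, α) is a transposed Hom-Poisson algebra
    ((∀ x y : A, mulα x y = mulα y x) ∧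
     (∀ x y z : A, mulα (mulα x y) (α z) = mulα (α x) (mulα y z)) ∧
     (∀ x y : A, brα x y = - brα y x) ∧
     (∀ x y z : A, brα (α x) (brα y z) + brα (α y) (brα z x) + brα (α z) (brα x y) = 0) ∧
     (∀ x y z : A,
       (2 : K) • mulα (α z) (brα x y) = brα (mulα z x) (α y) + brα (α x) (mulα z y))) ∧
    -- f is a morphism of the twisted transposed Hom-Poisson algebras
    ((∀ x y : A, f (mulα x y) = mul'α' (f x) (f y)) ∧
     (∀ x y : A, f (brα x y) = br'α' (f x) (f y)) ∧
     (∀ x : A, f (α x) = α' (f x))) := by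
  refine ⟨⟨?_, ?_, ?_, ?_, ?_⟩, ?_, ?_, hfα⟩
  · intro x y
    rw [hmulα, hmulα, hcomm]
  · intro x y z
    simp only [hmulα, hαm]
    exact hassoc _ _ _
  · intro x y
    rw [hbrα, hbrα, hskew, map_neg]
  · intro x y z
    simp only [hbrα, hαb]
    exact hjac _ _ _
  · intro x y z
    simp only [hmulα, hbrα, hαm, hαb]
    exact hleib _ _ _
  · intro x y
    rw [hmulα, hmul'α', hfα, hfm]
  · intro x y
    rw [hbrα, hbr'α', hfα, hfb]
end

section
/- Let (A₁,·₁,{·,·}₁,α₁) and (A₂,·₂,{·,·}₂,α₂) be two multiplicative transposed Hom-Poisson algebras. On the tensor product A₁ ⊗ A₂ define (x₁⊗x₂)·(y₁⊗y₂) = (x₁·₁y₁) ⊗ (x₂·₂y₂), [x₁⊗x₂, y₁⊗y₂] = {x₁,y₁}₁ ⊗ (x₂·₂y₂) + (x₁·₁y₁) ⊗ {x₂,y₂}₂, and (α₁⊗α₂)(x₁⊗x₂) = α₁(x₁) ⊗ α₂(x₂). Then (A₁⊗A₂, ·, [·,·], α₁⊗α₂) is a transposed Hom-Poisson algebra. 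-/
open TensorProduct

/-- The tensor product of two multiplicative transposed Hom-Poisson
algebras is a transposed Hom-Poisson algebra. -/
theorem tensorProduct_transposedHomPoisson
    {K A₁ A₂ : Type*} [Field K] [CharZero K]
    [AddCommGroup A₁] [Module K A₁] [AddCommGroup A₂] [Module K A₂]
    -- transposed Hom-Poisson algebra (A₁, mul₁, br₁, α₁), multiplicative
    (mul₁ : A₁ →ₗ[K] A₁ →ₗ[K] A₁) (br₁ : A₁ →ₗ[K] A₁ →ₗ[K] A₁) (α₁ : A₁ →ₗ[K] A₁)
    (hcomm₁ : ∀ x y : A₁, mul₁ x y = mul₁ y x)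
    (hassoc₁ : ∀ x y z : A₁, mul₁ (mul₁ x y) (α₁ z) = mul₁ (α₁ x) (mul₁ y z))
    (hskew₁ : ∀ x y : A₁, br₁ x y = - br₁ y x)
    (hjac₁ : ∀ x y z : A₁,
      br₁ (α₁ x) (br₁ y z) + br₁ (α₁ y) (br₁ z x) + br₁ (α₁ z) (br₁ x y) = 0)
    (hleib₁ : ∀ x y z : A₁,
      (2 : K) • mul₁ (α₁ z) (br₁ x y) = br₁ (mul₁ z x) (α₁ y) + br₁ (α₁ x) (mul₁ z y))
    (hmultm₁ : ∀ x y : A₁, α₁ (mul₁ x y) = mul₁ (α₁ x) (α₁ y))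
    (hmultb₁ : ∀ x y : A₁, α₁ (br₁ x y) = br₁ (α₁ x) (α₁ y))
    -- transposed Hom-Poisson algebra (A₂, mul₂, br₂, α₂), multiplicative
    (mul₂ : A₂ →ₗ[K] A₂ →ₗ[K] A₂) (br₂ : A₂ →ₗ[K] A₂ →ₗ[K] A₂) (α₂ : A₂ →ₗ[K] A₂)
    (hcomm₂ : ∀ x y : A₂, mul₂ x y = mul₂ y x)
    (hassoc₂ : ∀ x y z : A₂, mul₂ (mul₂ x y) (α₂ z) = mul₂ (α₂ x) (mul₂ y z))
    (hskew₂ : ∀ x y : A₂, br₂ x y = - br₂ y x)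
    (hjac₂ : ∀ x y z : A₂,
      br₂ (α₂ x) (br₂ y z) + br₂ (α₂ y) (br₂ z x) + br₂ (α₂ z) (br₂ x y) = 0)
    (hleib₂ : ∀ x y z : A₂,
      (2 : K) • mul₂ (α₂ z) (br₂ x y) = br₂ (mul₂ z x) (α₂ y) + br₂ (α₂ x) (mul₂ z y))
    (hmultm₂ : ∀ x y : A₂, α₂ (mul₂ x y) = mul₂ (α₂ x) (α₂ y))
    (hmultb₂ : ∀ x y : A₂, α₂ (br₂ x y) = br₂ (α₂ x) (α₂ y))
    -- the bilinear structure maps on the tensor product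
    (mul : (A₁ ⊗[K] A₂) →ₗ[K] (A₁ ⊗[K] A₂) →ₗ[K] (A₁ ⊗[K] A₂))
    (br : (A₁ ⊗[K] A₂) →ₗ[K] (A₁ ⊗[K] A₂) →ₗ[K] (A₁ ⊗[K] A₂))
    (hmul : ∀ (x₁ y₁ : A₁) (x₂ y₂ : A₂),
      mul (x₁ ⊗ₜ[K] x₂) (y₁ ⊗ₜ[K] y₂) = (mul₁ x₁ y₁) ⊗ₜ[K] (mul₂ x₂ y₂))
    (hbr : ∀ (x₁ y₁ : A₁) (x₂ y₂ : A₂),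
      br (x₁ ⊗ₜ[K] x₂) (y₁ ⊗ₜ[K] y₂) =
        (br₁ x₁ y₁) ⊗ₜ[K] (mul₂ x₂ y₂) + (mul₁ x₁ y₁) ⊗ₜ[K] (br₂ x₂ y₂)) :
    (∀ u w : A₁ ⊗[K] A₂, mul u w = mul w u) ∧
    (∀ u w t : A₁ ⊗[K] A₂,
      mul (mul u w) (TensorProduct.map α₁ α₂ t) =
        mul (TensorProduct.map α₁ α₂ u) (mul w t)) ∧
    (∀ u w : A₁ ⊗[K] A₂, br u w = - br w u) ∧
    (∀ u w t : A₁ ⊗[K] A₂,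
      br (TensorProduct.map α₁ α₂ u) (br w t) +
        br (TensorProduct.map α₁ α₂ w) (br t u) +
        br (TensorProduct.map α₁ α₂ t) (br u w) = 0) ∧
    (∀ u w t : A₁ ⊗[K] A₂,
      (2 : K) • mul (TensorProduct.map α₁ α₂ t) (br u w) =
        br (mul t u) (TensorProduct.map α₁ α₂ w) +
          br (TensorProduct.map α₁ α₂ u) (mul t w)) := by
  have hS₁ : ∀ x y z : A₁, mul₁ (α₁ y) (mul₁ z x) = mul₁ (α₁ x) (mul₁ y z) := by
    intro x y z
    rw [← hassoc₁ x y z, hcomm₁ x y, hassoc₁ y x z, hcomm₁ z x]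
  have hS₂ : ∀ x y z : A₂, mul₂ (α₂ y) (mul₂ z x) = mul₂ (α₂ x) (mul₂ y z) := by
    intro x y z
    rw [← hassoc₂ x y z, hcomm₂ x y, hassoc₂ y x z, hcomm₂ z x]
  have hP₁ : ∀ x y z : A₁, mul₁ (α₁ z) (br₁ x y) =
      (2⁻¹ : K) • (br₁ (α₁ x) (mul₁ y z) - br₁ (α₁ y) (mul₁ z x)) := by
    intro x y z
    rw [eq_inv_smul_iff₀ two_ne_zero, hleib₁, hskew₁ (mul₁ z x), hcomm₁ z y]
    abel
  have hP₂ : ∀ x y z : A₂, mul₂ (α₂ z) (br₂ x y) =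
      (2⁻¹ : K) • (br₂ (α₂ x) (mul₂ y z) - br₂ (α₂ y) (mul₂ z x)) := by
    intro x y z
    rw [eq_inv_smul_iff₀ two_ne_zero, hleib₂, hskew₂ (mul₂ z x), hcomm₂ z y]
    abel
  refine ⟨?_, ?_, ?_, ?_, ?_⟩
  · intro u w
    induction u using TensorProduct.induction_on with
    | zero => simp
    | add a b ha hb =>
      simp only [map_add, LinearMap.add_apply, smul_add]
      rw [ha, hb]
    | tmul u₁ u₂ =>
      induction w using TensorProduct.induction_on with
      | zero => simp
      | add a b ha hb =>
        simp only [map_add, LinearMap.add_apply, smul_add]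
        rw [ha, hb]
      | tmul w₁ w₂ =>
        rw [hmul, hmul, hcomm₁, hcomm₂]
  · intro u w t
    induction u using TensorProduct.induction_on with
    | zero => simp
    | add a b ha hb =>
      simp only [map_add, LinearMap.add_apply, smul_add]
      rw [ha, hb]
    | tmul u₁ u₂ =>
      induction w using TensorProduct.induction_on with
      | zero => simp
      | add a b ha hb =>
        simp only [map_add, LinearMap.add_apply, smul_add]
        rw [ha, hb]
      | tmul w₁ w₂ =>
        induction t using TensorProduct.induction_on with
        | zero => simp
        | add a b ha hb =>
          simp only [map_add, LinearMap.add_apply, smul_add]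
          rw [ha, hb]
        | tmul t₁ t₂ =>
          simp only [hmul, TensorProduct.map_tmul, hassoc₁, hassoc₂]
  · intro u w
    induction u using TensorProduct.induction_on with
    | zero => simp
    | add a b ha hb =>
      simp only [map_add, LinearMap.add_apply, smul_add]
      rw [ha, hb]
      abel
    | tmul u₁ u₂ =>
      induction w using TensorProduct.induction_on with
      | zero => simp
      | add a b ha hb =>
        simp only [map_add, LinearMap.add_apply, smul_add]
        rw [ha, hb]
        abel
      | tmul w₁ w₂ =>
        rw [hbr, hbr, hskew₁ u₁, hskew₂ u₂, hcomm₁ u₁, hcomm₂ u₂, neg_tmul, tmul_neg]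
        abel
  · intro u w t
    induction u using TensorProduct.induction_on with
    | zero => simp
    | add a b ha hb =>
      simp only [map_add, LinearMap.add_apply, smul_add]
      linear_combination (norm := module) ha + hb
    | tmul u₁ u₂ =>
      induction w using TensorProduct.induction_on with
      | zero => simp
      | add a b ha hb =>
        simp only [map_add, LinearMap.add_apply, smul_add]
        linear_combination (norm := module) ha + hb
      | tmul w₁ w₂ =>
        induction t using TensorProduct.induction_on with
        | zero => simp
        | add a b ha hb =>
          simp only [map_add, LinearMap.add_apply, smul_add]
          linear_combination (norm := module) ha + hb
        | tmul t₁ t₂ =>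
          have j₁ : br₁ (α₁ t₁) (br₁ u₁ w₁) = - br₁ (α₁ u₁) (br₁ w₁ t₁) - br₁ (α₁ w₁) (br₁ t₁ u₁) := by
            linear_combination (norm := module) hjac₁ u₁ w₁ t₁
          have j₂ : br₂ (α₂ t₂) (br₂ u₂ w₂) = - br₂ (α₂ u₂) (br₂ w₂ t₂) - br₂ (α₂ w₂) (br₂ t₂ u₂) := by
            linear_combination (norm := module) hjac₂ u₂ w₂ t₂
          simp only [hbr, TensorProduct.map_tmul, map_add, j₁, j₂, hP₁, hP₂]
          rw [hS₁ u₁ w₁ t₁, hS₂ u₂ w₂ t₂, ← hS₁ t₁ u₁ w₁, ← hS₂ t₂ u₂ w₂]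
          simp only [sub_tmul, tmul_sub, neg_tmul, tmul_neg, ← smul_tmul', tmul_smul]
          module
  · intro u w t
    induction u using TensorProduct.induction_on with
    | zero => simp
    | add a b ha hb =>
      simp only [map_add, LinearMap.add_apply, smul_add]
      rw [ha, hb]
      abel
    | tmul u₁ u₂ =>
      induction w using TensorProduct.induction_on with
      | zero => simp
      | add a b ha hb =>
        simp only [map_add, LinearMap.add_apply, smul_add]
        rw [ha, hb]
        abel
      | tmul w₁ w₂ =>
        induction t using TensorProduct.induction_on with
        | zero => simp
        | add a b ha hb =>
          simp only [map_add, LinearMap.add_apply, smul_add]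
          rw [ha, hb]
          abel
        | tmul t₁ t₂ =>
          have e₁ : mul₁ (mul₁ t₁ u₁) (α₁ w₁) = mul₁ (α₁ t₁) (mul₁ u₁ w₁) := hassoc₁ _ _ _
          have e₂ : mul₂ (mul₂ t₂ u₂) (α₂ w₂) = mul₂ (α₂ t₂) (mul₂ u₂ w₂) := hassoc₂ _ _ _
          have f₁ : mul₁ (α₁ u₁) (mul₁ t₁ w₁) = mul₁ (α₁ t₁) (mul₁ u₁ w₁) := by
            rw [hcomm₁ t₁ w₁, hS₁ t₁ u₁ w₁]
          have f₂ : mul₂ (α₂ u₂) (mul₂ t₂ w₂) = mul₂ (α₂ t₂) (mul₂ u₂ w₂) := by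
            rw [hcomm₂ t₂ w₂, hS₂ t₂ u₂ w₂]
          simp only [hbr, hmul, TensorProduct.map_tmul, map_add, smul_add]
          rw [smul_tmul', ← tmul_smul, hleib₁, hleib₂, e₁, e₂, f₁, f₂, add_tmul, tmul_add]
          abel
end

section
/- Let (A,·,{·,·},α) be a transposed Hom-Poisson algebra and (s,ρ,β,V) a representation of it. Then the direct sum A ⊕ V with product (x₁+v₁)·'(x₂+v₂) = x₁·x₂ + s(x₁)v₂ + s(x₂)v₁, bracket {x₁+v₁, x₂+v₂}' = {x₁,x₂} + ρ(x₁)v₂ − ρ(x₂)v₁, and linear map (α⊕β)(x+v) = α(x)+β(v) is a transposed Hom-Poisson algebra. -/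
/-- The semidirect sum of a transposed Hom-Poisson algebra with a
representation is a transposed Hom-Poisson algebra. -/
theorem semidirect_transposedHomPoisson
    {K A V : Type*} [Field K] [CharZero K]
    [AddCommGroup A] [Module K A] [AddCommGroup V] [Module K V]
    -- transposed Hom-Poisson algebra (A, mul, br, α)
    (mul : A →ₗ[K] A →ₗ[K] A) (br : A →ₗ[K] A →ₗ[K] A) (α : A →ₗ[K] A)
    (hcomm : ∀ x y : A, mul x y = mul y x)
    (hassoc : ∀ x y z : A, mul (mul x y) (α z) = mul (α x) (mul y z))
    (hskew : ∀ x y : A, br x y = - br y x)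
    (hjac : ∀ x y z : A, br (α x) (br y z) + br (α y) (br z x) + br (α z) (br x y) = 0)
    (hleib : ∀ x y z : A,
      (2 : K) • mul (α z) (br x y) = br (mul z x) (α y) + br (α x) (mul z y))
    -- representation (s, ρ, β, V)
    (s ρ : A →ₗ[K] V →ₗ[K] V) (β : V →ₗ[K] V)
    (hs1 : ∀ (x y : A) (v : V), s (mul x y) (β v) = s (α x) (s y v))
    (hs2 : ∀ (x : A) (v : V), β (s x v) = s (α x) (β v))
    (hρ1 : ∀ (x y : A) (v : V), ρ (br x y) (β v) = ρ (α x) (ρ y v) - ρ (α y) (ρ x v))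
    (hρ2 : ∀ (x : A) (v : V), β (ρ x v) = ρ (α x) (β v))
    (hc1 : ∀ (x y : A) (v : V),
      (2 : K) • s (br x y) (β v) = ρ (α x) (s y v) - ρ (α y) (s x v))
    (hc2 : ∀ (x y : A) (v : V),
      (2 : K) • s (α x) (ρ y v) = ρ (mul x y) (β v) + ρ (α y) (s x v))
    -- operations on the direct sum A × V
    (mul' br' : (A × V) → (A × V) → (A × V)) (αβ : (A × V) → (A × V))
    (hmul' : ∀ u w : A × V, mul' u w = (mul u.1 w.1, s u.1 w.2 + s w.1 u.2))
    (hbr' : ∀ u w : A × V, br' u w = (br u.1 w.1, ρ u.1 w.2 - ρ w.1 u.2))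
    (hαβ : ∀ u : A × V, αβ u = (α u.1, β u.2)) :
    (∀ u w : A × V, mul' u w = mul' w u) ∧
    (∀ u w t : A × V, mul' (mul' u w) (αβ t) = mul' (αβ u) (mul' w t)) ∧
    (∀ u w : A × V, br' u w = - br' w u) ∧
    (∀ u w t : A × V,
      br' (αβ u) (br' w t) + br' (αβ w) (br' t u) + br' (αβ t) (br' u w) = 0) ∧
    (∀ u w t : A × V,
      (2 : K) • mul' (αβ t) (br' u w) = br' (mul' t u) (αβ w) + br' (αβ u) (mul' t w)) := by
  refine ⟨?_, ?_, ?_, ?_, ?_⟩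
  · rintro ⟨x, a⟩ ⟨y, b⟩
    simp only [hmul', Prod.mk.injEq]
    exact ⟨hcomm x y, add_comm _ _⟩
  · rintro ⟨x, a⟩ ⟨y, b⟩ ⟨z, c⟩
    simp only [hmul', hαβ, Prod.mk.injEq, map_add]
    refine ⟨hassoc x y z, ?_⟩
    rw [hs1 x y c, ← hs1 z x b, hcomm z x, hs1 x z b, hcomm y z, hs1 z y a]
    abel
  · rintro ⟨x, a⟩ ⟨y, b⟩
    simp only [hbr', Prod.neg_mk, Prod.mk.injEq, neg_sub]
    exact ⟨hskew x y, trivial⟩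
  · rintro ⟨x, a⟩ ⟨y, b⟩ ⟨z, c⟩
    simp only [hbr', hαβ, Prod.mk_add_mk, Prod.mk_eq_zero, map_sub]
    refine ⟨hjac x y z, ?_⟩
    rw [hρ1 y z a, hρ1 z x b, hρ1 x y c]
    abel
  · rintro ⟨x, a⟩ ⟨y, b⟩ ⟨z, c⟩
    simp only [hbr', hmul', hαβ, Prod.mk_add_mk, Prod.smul_mk, Prod.mk.injEq, map_sub, map_add,
      smul_add, smul_sub]
    refine ⟨hleib x y z, ?_⟩
    rw [hc2 z x b, hc2 z y a, hc1 x y c]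
    abel
end

section
/- Let (A,∗,α) be a Hom-pre-Lie algebra and (l,r,β,V) a bimodule of (A,∗,α). Let {x,y} = x∗y − y∗x be the sub-adjacent Hom-Lie bracket. Then (l−r, β, V) is a representation of the Hom-Lie algebra (A,{·,·},α): (l−r)({x,y})β(v) = (l−r)(α(x))((l−r)(y)v) − (l−r)(α(y))((l−r)(x)v) and β((l−r)(x)v) = (l−r)(α(x))β(v) for all x,y ∈ A, v ∈ V. -/
/-- If (l,r,β,V) is a bimodule of a Hom-pre-Lie algebra (A,∗,α),
then (l−r,β,V) is a representation of the sub-adjacent Hom-Lie algebra. -/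
theorem homLie_rep_of_homPreLie_bimodule
    {K A V : Type*} [Field K] [CharZero K]
    [AddCommGroup A] [Module K A] [AddCommGroup V] [Module K V]
    (star : A →ₗ[K] A →ₗ[K] A) (α : A →ₗ[K] A)
    (hpre : ∀ x y z : A,
      star (star x y) (α z) - star (α x) (star y z) =
        star (star y x) (α z) - star (α y) (star x z))
    (l r : A →ₗ[K] V →ₗ[K] V) (β : V →ₗ[K] V)
    (hl : ∀ (x y : A) (v : V),
      l (star x y - star y x) (β v) = l (α x) (l y v) - l (α y) (l x v))
    (hr : ∀ (x y : A) (v : V),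
      r (α y) (l x v - r x v) = l (α x) (r y v) - r (star x y) (β v))
    (hβl : ∀ (x : A) (v : V), β (l x v) = l (α x) (β v))
    (hβr : ∀ (x : A) (v : V), β (r x v) = r (α x) (β v)) :
    (∀ (x y : A) (v : V),
      l (star x y - star y x) (β v) - r (star x y - star y x) (β v) =
        (l (α x) (l y v - r y v) - r (α x) (l y v - r y v)) -
          (l (α y) (l x v - r x v) - r (α y) (l x v - r x v))) ∧
    (∀ (x : A) (v : V), β (l x v - r x v) = l (α x) (β v) - r (α x) (β v)) := by
  refine ⟨fun x y v => ?_, fun x v => ?_⟩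
  · rw [hl, hr, hr]
    simp only [map_sub, LinearMap.sub_apply]
    abel
  · rw [map_sub, hβl, hβr]
end

section
/- Let (A,·,∗) be a pre-Lie Poisson algebra and α : A → A a morphism of pre-Lie Poisson algebras (α(x·y) = α(x)·α(y) and α(x∗y) = α(x)∗α(y)). Define x ·_α y = α(x·y) and x ∗_α y = α(x∗y). Then (A, ·_α, ∗_α, α) is a Hom-pre-Lie Poisson algebra. Moreover, if (A',·',∗') is another pre-Lie Poisson algebra with morphism α', and f : A → A' is a morphism of pre-Lie Poisson algebras with f∘α = α'∘f, then f is a morphism of the Hom-pre-Lie Poisson algebras (A,·_α,∗_α,α) → (A',·'_{α'},∗'_{α'},α'). -/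
/-- The Yau twist of a pre-Lie Poisson algebra along a morphism α
is a Hom-pre-Lie Poisson algebra, and morphisms commuting with the twisting maps
are carried to morphisms of the twisted algebras. -/
theorem yauTwist_preLiePoisson
    {K A A' : Type*} [Field K] [CharZero K]
    [AddCommGroup A] [Module K A] [AddCommGroup A'] [Module K A']
    -- pre-Lie Poisson algebra (A, mul, star)
    (mul : A →ₗ[K] A →ₗ[K] A) (star : A →ₗ[K] A →ₗ[K] A)
    (hcomm : ∀ x y : A, mul x y = mul y x)
    (hassoc : ∀ x y z : A, mul (mul x y) z = mul x (mul y z))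
    (hpre : ∀ x y z : A,
      star (star x y) z - star x (star y z) = star (star y x) z - star y (star x z))
    (hcompat1 : ∀ x y z : A, star (mul x y) z = mul x (star y z))
    (hcompat2 : ∀ x y z : A,
      mul (star x y) z - mul (star y x) z = star x (mul y z) - star y (mul x z))
    -- morphism α of (A, mul, star)
    (α : A →ₗ[K] A)
    (hαm : ∀ x y : A, α (mul x y) = mul (α x) (α y))
    (hαs : ∀ x y : A, α (star x y) = star (α x) (α y))
    -- twisted operations on A
    (mulα starα : A → A → A)
    (hmulα : ∀ x y : A, mulα x y = α (mul x y))
    (hstarα : ∀ x y : A, starα x y = α (star x y))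
    -- pre-Lie Poisson algebra (A', mul', star')
    (mul' : A' →ₗ[K] A' →ₗ[K] A') (star' : A' →ₗ[K] A' →ₗ[K] A')
    (hcomm' : ∀ x y : A', mul' x y = mul' y x)
    (hassoc' : ∀ x y z : A', mul' (mul' x y) z = mul' x (mul' y z))
    (hpre' : ∀ x y z : A',
      star' (star' x y) z - star' x (star' y z) = star' (star' y x) z - star' y (star' x z))
    (hcompat1' : ∀ x y z : A', star' (mul' x y) z = mul' x (star' y z))
    (hcompat2' : ∀ x y z : A',
      mul' (star' x y) z - mul' (star' y x) z = star' x (mul' y z) - star' y (mul' x z))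
    -- morphism α' of (A', mul', star')
    (α' : A' →ₗ[K] A')
    (hα'm : ∀ x y : A', α' (mul' x y) = mul' (α' x) (α' y))
    (hα's : ∀ x y : A', α' (star' x y) = star' (α' x) (α' y))
    -- twisted operations on A'
    (mul'α' star'α' : A' → A' → A')
    (hmul'α' : ∀ x y : A', mul'α' x y = α' (mul' x y))
    (hstar'α' : ∀ x y : A', star'α' x y = α' (star' x y))
    -- morphism f of pre-Lie Poisson algebras commuting with the twists
    (f : A →ₗ[K] A')
    (hfm : ∀ x y : A, f (mul x y) = mul' (f x) (f y))
    (hfs : ∀ x y : A, f (star x y) = star' (f x) (f y))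
    (hfα : ∀ x : A, f (α x) = α' (f x)) :
    -- (A, mulα, starα, α) is a Hom-pre-Lie Poisson algebra
    ((∀ x y : A, mulα x y = mulα y x) ∧
     (∀ x y z : A, mulα (mulα x y) (α z) = mulα (α x) (mulα y z)) ∧
     (∀ x y z : A,
       starα (starα x y) (α z) - starα (α x) (starα y z) =
         starα (starα y x) (α z) - starα (α y) (starα x z)) ∧
     (∀ x y z : A, starα (mulα x y) (α z) = mulα (α x) (starα y z)) ∧
     (∀ x y z : A,
       mulα (starα x y) (α z) - mulα (starα y x) (α z) =
         starα (α x) (mulα y z) - starα (α y) (mulα x z))) ∧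
    -- f is a morphism of the twisted Hom-pre-Lie Poisson algebras
    ((∀ x y : A, f (mulα x y) = mul'α' (f x) (f y)) ∧
     (∀ x y : A, f (starα x y) = star'α' (f x) (f y)) ∧
     (∀ x : A, f (α x) = α' (f x))) := by
  refine ⟨⟨?_, ?_, ?_, ?_, ?_⟩, ?_, ?_, hfα⟩
  · intro x y
    rw [hmulα, hmulα, hcomm]
  · intro x y z
    simp only [hmulα, hαm]
    exact hassoc _ _ _
  · intro x y z
    simp only [hstarα, hαs]
    exact hpre _ _ _
  · intro x y z
    simp only [hmulα, hstarα, hαm, hαs]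
    exact hcompat1 _ _ _
  · intro x y z
    simp only [hmulα, hstarα, hαm, hαs]
    exact hcompat2 _ _ _
  · intro x y
    rw [hmulα, hmul'α', hfα, hfm]
  · intro x y
    rw [hstarα, hstar'α', hfα, hfs]
end

section
/- Let (A,·,∗,α) be a Hom-pre-Lie Poisson algebra and define {x,y} = x∗y − y∗x. Then (A,·,{·,·},α) is a transposed Hom-Poisson algebra: (A,{·,·},α) is a Hom-Lie algebra and 2α(z)·{x,y} = {z·x,α(y)} + {α(x),z·y} for all x,y,z ∈ A. -/
/-- The sub-adjacent algebra of a Hom-pre-Lie Poisson algebra,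
with bracket {x,y} = x∗y − y∗x, is a transposed Hom-Poisson algebra. -/
theorem transposedHomPoisson_of_homPreLiePoisson
    {K A : Type*} [Field K] [CharZero K] [AddCommGroup A] [Module K A]
    (mul : A →ₗ[K] A →ₗ[K] A) (star : A →ₗ[K] A →ₗ[K] A) (α : A →ₗ[K] A)
    (hcomm : ∀ x y : A, mul x y = mul y x)
    (hassoc : ∀ x y z : A, mul (mul x y) (α z) = mul (α x) (mul y z))
    (hpre : ∀ x y z : A,
      star (star x y) (α z) - star (α x) (star y z) =
        star (star y x) (α z) - star (α y) (star x z))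
    (hcompat1 : ∀ x y z : A, star (mul x y) (α z) = mul (α x) (star y z))
    (hcompat2 : ∀ x y z : A,
      mul (star x y) (α z) - mul (star y x) (α z) =
        star (α x) (mul y z) - star (α y) (mul x z))
    (br : A → A → A)
    (hbr : ∀ x y : A, br x y = star x y - star y x) :
    (∀ x y : A, br x y = - br y x) ∧
    (∀ x y z : A, br (α x) (br y z) + br (α y) (br z x) + br (α z) (br x y) = 0) ∧
    (∀ x y z : A,
      (2 : K) • mul (α z) (br x y) = br (mul z x) (α y) + br (α x) (mul z y)) := by
  refine ⟨fun x y => ?_, fun x y z => ?_, fun x y z => ?_⟩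
  · rw [hbr, hbr]; abel
  · have h1 := sub_eq_zero.mpr (hpre x y z)
    have h2 := sub_eq_zero.mpr (hpre y z x)
    have h3 := sub_eq_zero.mpr (hpre z x y)
    simp only [hbr, map_sub, LinearMap.sub_apply]
    linear_combination (norm := abel) - h1 - h2 - h3
  · have h := hcompat2 x y z
    rw [hcomm (star x y), hcomm (star y x), hcomm y z, hcomm x z] at h
    simp only [hbr, map_sub, hcompat1]
    rw [two_smul]
    linear_combination (norm := abel) h
end

section
/- Let (A,·,∗,α) be a Hom-pre-Lie Poisson algebra and (s,l,r,β,V) a bimodule of it. Then the direct sum A ⊕ V with product (x₁+v₁)·'(x₂+v₂) = x₁·x₂ + s(x₁)v₂ + s(x₂)v₁, product (x₁+v₁)∗'(x₂+v₂) = x₁∗x₂ + l(x₁)v₂ + r(x₂)v₁, and linear map (α⊕β)(x+v) = α(x)+β(v) is a Hom-pre-Lie Poisson algebra. -/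
/-- The semidirect sum of a Hom-pre-Lie Poisson algebra with a
bimodule is a Hom-pre-Lie Poisson algebra. -/
theorem semidirect_homPreLiePoisson
    {K A V : Type*} [Field K] [CharZero K]
    [AddCommGroup A] [Module K A] [AddCommGroup V] [Module K V]
    -- Hom-pre-Lie Poisson algebra (A, mul, star, α)
    (mul : A →ₗ[K] A →ₗ[K] A) (star : A →ₗ[K] A →ₗ[K] A) (α : A →ₗ[K] A)
    (hcomm : ∀ x y : A, mul x y = mul y x)
    (hassoc : ∀ x y z : A, mul (mul x y) (α z) = mul (α x) (mul y z))
    (hpre : ∀ x y z : A,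
      star (star x y) (α z) - star (α x) (star y z) =
        star (star y x) (α z) - star (α y) (star x z))
    (hcompat1 : ∀ x y z : A, star (mul x y) (α z) = mul (α x) (star y z))
    (hcompat2 : ∀ x y z : A,
      mul (star x y) (α z) - mul (star y x) (α z) =
        star (α x) (mul y z) - star (α y) (mul x z))
    -- bimodule (s, l, r, β, V)
    (s l r : A →ₗ[K] V →ₗ[K] V) (β : V →ₗ[K] V)
    (hs1 : ∀ (x y : A) (v : V), s (mul x y) (β v) = s (α x) (s y v))
    (hs2 : ∀ (x : A) (v : V), β (s x v) = s (α x) (β v))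
    (hl : ∀ (x y : A) (v : V),
      l (star x y - star y x) (β v) = l (α x) (l y v) - l (α y) (l x v))
    (hr : ∀ (x y : A) (v : V),
      r (α y) (l x v - r x v) = l (α x) (r y v) - r (star x y) (β v))
    (hβl : ∀ (x : A) (v : V), β (l x v) = l (α x) (β v))
    (hβr : ∀ (x : A) (v : V), β (r x v) = r (α x) (β v))
    (hc1 : ∀ (x y : A) (v : V), l (mul x y) (β v) = s (α x) (l y v))
    (hc2 : ∀ (x y : A) (v : V), r (α y) (s x v) = s (star x y) (β v))
    (hc3 : ∀ (x y : A) (v : V), r (α y) (s x v) = s (α x) (r y v))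
    (hc4 : ∀ (x y : A) (v : V),
      s (star x y - star y x) (β v) = l (α x) (s y v) - l (α y) (s x v))
    (hc5 : ∀ (x y : A) (v : V),
      s (α y) (l x v - r x v) = l (α x) (s y v) - r (mul x y) (β v))
    -- operations on the direct sum A × V
    (mul' star' : (A × V) → (A × V) → (A × V)) (αβ : (A × V) → (A × V))
    (hmul' : ∀ u w : A × V, mul' u w = (mul u.1 w.1, s u.1 w.2 + s w.1 u.2))
    (hstar' : ∀ u w : A × V, star' u w = (star u.1 w.1, l u.1 w.2 + r w.1 u.2))
    (hαβ : ∀ u : A × V, αβ u = (α u.1, β u.2)) :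
    (∀ u w : A × V, mul' u w = mul' w u) ∧
    (∀ u w t : A × V, mul' (mul' u w) (αβ t) = mul' (αβ u) (mul' w t)) ∧
    (∀ u w t : A × V,
      star' (star' u w) (αβ t) - star' (αβ u) (star' w t) =
        star' (star' w u) (αβ t) - star' (αβ w) (star' u t)) ∧
    (∀ u w t : A × V, star' (mul' u w) (αβ t) = mul' (αβ u) (star' w t)) ∧
    (∀ u w t : A × V,
      mul' (star' u w) (αβ t) - mul' (star' w u) (αβ t) =
        star' (αβ u) (mul' w t) - star' (αβ w) (mul' u t)) := by
  simp only [map_sub, LinearMap.sub_apply] at hl hr hc4 hc5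
  refine ⟨?_, ?_, ?_, ?_, ?_⟩
  · rintro ⟨x, a⟩ ⟨y, b⟩
    simp only [hmul']
    exact Prod.ext (hcomm x y) (add_comm _ _)
  · rintro ⟨x, a⟩ ⟨y, b⟩ ⟨z, c⟩
    simp only [hmul', hαβ]
    refine Prod.ext (hassoc x y z) ?_
    simp only [map_add]
    rw [← hs1 z x b, ← hs1 z y a, ← hs1 x y c, ← hs1 x z b, hcomm z x, hcomm z y]
    abel
  · rintro ⟨x, a⟩ ⟨y, b⟩ ⟨z, c⟩
    simp only [hstar', hαβ]
    refine Prod.ext (hpre x y z) ?_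
    simp only [map_add, Prod.snd_sub]
    linear_combination (norm := module) hl x y c + hr x z b - hr y z a
  · rintro ⟨x, a⟩ ⟨y, b⟩ ⟨z, c⟩
    simp only [hmul', hstar', hαβ]
    refine Prod.ext (hcompat1 x y z) ?_
    simp only [map_add]
    rw [hc1, hc3 x z b, hc2 y z a]
    abel
  · rintro ⟨x, a⟩ ⟨y, b⟩ ⟨z, c⟩
    simp only [hmul', hstar', hαβ]
    refine Prod.ext (hcompat2 x y z) ?_
    simp only [map_add, Prod.snd_sub]
    linear_combination (norm := module) hc4 x y c + hc5 x z b - hc5 y z a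
end

section
/- Let (A,·,α) be a commutative Hom-associative algebra, (s,β,V) a bimodule of (A,·,α), and T : V → A a linear map satisfying α∘T = T∘β and T(u)·T(v) = T(s(T(u))v + s(T(v))u) for all u,v ∈ V (an O-operator). Define u ◇ v = s(T(u))v + s(T(v))u on V. Then (V,◇,β) is a commutative Hom-associative algebra: u◇v = v◇u and (u◇v)◇β(w) = β(u)◇(v◇w) for all u,v,w ∈ V. -/
/-- An O-operator on a commutative Hom-associative algebra induces a
commutative Hom-associative algebra structure on the bimodule. -/
theorem commHomAssoc_of_Ooperator
    {K A V : Type*} [Field K] [CharZero K]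
    [AddCommGroup A] [Module K A] [AddCommGroup V] [Module K V]
    (mul : A →ₗ[K] A →ₗ[K] A) (α : A →ₗ[K] A)
    (hcomm : ∀ x y : A, mul x y = mul y x)
    (hassoc : ∀ x y z : A, mul (mul x y) (α z) = mul (α x) (mul y z))
    (s : A →ₗ[K] V →ₗ[K] V) (β : V →ₗ[K] V)
    (hb1 : ∀ (x y : A) (v : V), s (mul x y) (β v) = s (α x) (s y v))
    (hb2 : ∀ (x : A) (v : V), β (s x v) = s (α x) (β v))
    (T : V →ₗ[K] A)
    (hTβ : ∀ v : V, α (T v) = T (β v))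
    (hT : ∀ u v : V, mul (T u) (T v) = T (s (T u) v + s (T v) u))
    (dia : V → V → V)
    (hdia : ∀ u v : V, dia u v = s (T u) v + s (T v) u) :
    (∀ u v : V, dia u v = dia v u) ∧
    (∀ u v w : V, dia (dia u v) (β w) = dia (β u) (dia v w)) := by
  refine ⟨fun u v => by rw [hdia, hdia, add_comm], fun u v w => ?_⟩
  have hTd : ∀ u v : V, T (dia u v) = mul (T u) (T v) := fun u v => by rw [hdia, hT]
  rw [hdia (dia u v), hdia (β u), hTd, hTd, ← hTβ, ← hTβ, hdia u v, hdia v w,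
    map_add, map_add, ← hb1, ← hb1, ← hb1, ← hb1, hcomm (T w) (T u), hcomm (T w) (T v)]
  abel
end

section
/- Let (A,[·,·],α) be a Hom-Lie algebra, (ρ,β,V) a representation of it, and T : V → A a linear map satisfying α∘T = T∘β and [T(u),T(v)] = T(ρ(T(u))v − ρ(T(v))u) for all u,v ∈ V (an O-operator). Define u ∗ v = ρ(T(u))v on V. Then (V,∗,β) is a Hom-pre-Lie algebra: (u∗v)∗β(w) − β(u)∗(v∗w) = (v∗u)∗β(w) − β(v)∗(u∗w) for all u,v,w ∈ V. -/
/-- An O-operator on a Hom-Lie algebra induces a Hom-pre-Lie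
algebra structure on the representation space. -/
theorem homPreLie_of_Ooperator
    {K A V : Type*} [Field K] [CharZero K]
    [AddCommGroup A] [Module K A] [AddCommGroup V] [Module K V]
    (br : A →ₗ[K] A →ₗ[K] A) (α : A →ₗ[K] A)
    (hskew : ∀ x y : A, br x y = - br y x)
    (hjac : ∀ x y z : A, br (α x) (br y z) + br (α y) (br z x) + br (α z) (br x y) = 0)
    (ρ : A →ₗ[K] V →ₗ[K] V) (β : V →ₗ[K] V)
    (hρ1 : ∀ (x y : A) (v : V), ρ (br x y) (β v) = ρ (α x) (ρ y v) - ρ (α y) (ρ x v))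
    (hρ2 : ∀ (x : A) (v : V), β (ρ x v) = ρ (α x) (β v))
    (T : V →ₗ[K] A)
    (hTβ : ∀ v : V, α (T v) = T (β v))
    (hT : ∀ u v : V, br (T u) (T v) = T (ρ (T u) v - ρ (T v) u))
    (star : V → V → V)
    (hstar : ∀ u v : V, star u v = ρ (T u) v) :
    ∀ u v w : V,
      star (star u v) (β w) - star (β u) (star v w) =
        star (star v u) (β w) - star (β v) (star u w) := by
  intro u v w
  have h := hρ1 (T u) (T v) w
  rw [hT, hTβ, hTβ, map_sub, map_sub, LinearMap.sub_apply] at h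
  simp only [hstar]
  rw [sub_eq_sub_iff_sub_eq_sub]
  exact h
end
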